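/- Let N be a finite set of players with a distinguished platform player w_p ∈ N, and let a session be given by an owner map P : {0,1,…,n} → N (n ≥ 1) with P(0) = w_p and P(k) ≠ w_p for 1 ≤ k ≤ n, and revenues r : {1,…,n} → ℝ with r(k) ≥ 0 for all k. Let ṽ be the single-session game under Assumptions 1 and 3, and define the allocation x̃_i := Σ_{k=1}^{n} ([i ∈ {P(0),P(k)}] / 2) · r(k) for each i ∈ N ([i ∈ {P(0),P(k)}] is 1 if i ∈ {P(0),P(k)} and 0 otherwise). Then x̃ lies in the core of ṽ: Σ_{i ∈ N} x̃_i = ṽ(N) and Σ_{i ∈ F} x̃_i ≥ ṽ(F) for every coalition F ⊆ N. -/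

import Mathlib

open Finset

/-!
The game is a nonnegative combination of unanimity games, one per event. Splitting the unit worth of
a unanimity game equally among its carrier gives a core allocation of that game, and core
allocations are stable under sums of games and nonnegative scaling.
-/

/-- The core of the transferable-utility game with worth function `w`, the allocations being payoff
vectors indexed by the players. The coalition `F = ∅` is included, so the core is empty unless
`w ∅ ≤ 0`. -/
def core {N M : Type*} [Fintype N] [AddCommMonoid M] [LE M] (w : Finset N → M) : Set (N → M) :=
  {x | ∑ i, x i = w univ ∧ ∀ F, w F ≤ ∑ i ∈ F, x i}

/-- The unanimity game on `T`: a coalition is worth `1` if it contains `T`, and `0` otherwise. -/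
def unanimityGame {N : Type*} [DecidableEq N] (K : Type*) [Zero K] [One K] (T F : Finset N) : K :=
  if T ⊆ F then 1 else 0

/-- The allocation dividing one unit equally among the members of `T`; it is zero for `T = ∅`. -/
def equalSplit {N : Type*} [DecidableEq N] (K : Type*) [DivisionSemiring K] (T : Finset N)
    (i : N) : K :=
  (if i ∈ T then 1 else 0) / #T

section Core

variable {N M : Type*} [Fintype N] [AddCommMonoid M] [Preorder M]

theorem sum_mem_core [IsOrderedAddMonoid M] {ι : Type*} {s : Finset ι} {x : ι → N → M}
    {w : ι → Finset N → M} (h : ∀ k ∈ s, x k ∈ core (w k)) :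
    ∑ k ∈ s, x k ∈ core (∑ k ∈ s, w k) := by
  refine ⟨?_, fun F ↦ ?_⟩
  · simp only [Finset.sum_apply]
    rw [sum_comm]
    exact sum_congr rfl fun k hk ↦ (h k hk).1
  · simp only [Finset.sum_apply]
    rw [sum_comm]
    exact sum_le_sum fun k hk ↦ (h k hk).2 F

theorem smul_mem_core {R : Type*} [Zero R] [Preorder R] [DistribSMul R M] [PosSMulMono R M]
    {c : R} (hc : 0 ≤ c) {x : N → M} {w : Finset N → M} (hx : x ∈ core w) :
    c • x ∈ core (c • w) := by
  refine ⟨?_, fun F ↦ ?_⟩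
  · simp only [Pi.smul_apply, ← smul_sum, hx.1]
  · simp only [Pi.smul_apply, ← smul_sum]
    exact smul_le_smul_of_nonneg_left (hx.2 F) hc

end Core

section EqualSplit

variable {N K : Type*} [DecidableEq N]

theorem sum_equalSplit [DivisionSemiring K] (T F : Finset N) :
    ∑ i ∈ F, equalSplit K T i = #(F ∩ T) / #T := by
  simp only [equalSplit]
  rw [← sum_div, sum_boole, filter_mem_eq_inter]

theorem sum_equalSplit_of_subset [DivisionSemiring K] [CharZero K] {T F : Finset N}
    (hT : T.Nonempty) (hTF : T ⊆ F) : ∑ i ∈ F, equalSplit K T i = 1 := by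
  rw [sum_equalSplit, inter_eq_right.mpr hTF, div_self (Nat.cast_ne_zero.mpr hT.card_ne_zero)]

variable [Fintype N] [Semifield K] [LinearOrder K] [IsStrictOrderedRing K]

theorem equalSplit_mem_core {T : Finset N} (hT : T.Nonempty) :
    equalSplit K T ∈ core (unanimityGame K T) := by
  refine ⟨?_, fun F ↦ ?_⟩
  · rw [sum_equalSplit_of_subset hT (subset_univ T), unanimityGame, if_pos (subset_univ T)]
  · rw [unanimityGame]
    split_ifs with hTF
    · exact (sum_equalSplit_of_subset hT hTF).ge
    · rw [sum_equalSplit]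
      positivity

theorem shapley_allocation_in_core_A13_general {ι : Type*} {s : Finset ι} {S : ι → Finset N}
    (hS : ∀ k ∈ s, (S k).Nonempty) {r : ι → K} (hr : ∀ k ∈ s, 0 ≤ r k) {v : Finset N → K}
    (hv : ∀ F, v F = ∑ k ∈ s, if S k ⊆ F then r k else 0) {x : N → K}
    (hx : ∀ i, x i = ∑ k ∈ s, (if i ∈ S k then 1 else 0) / (#(S k) : K) * r k) :
    x ∈ core v := by
  have v_eq : v = ∑ k ∈ s, r k • unanimityGame K (S k) := by
    ext F
    simp only [hv, Finset.sum_apply, Pi.smul_apply, smul_eq_mul, unanimityGame, mul_ite, mul_one,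
      mul_zero]
  have x_eq : x = ∑ k ∈ s, r k • equalSplit K (S k) := by
    ext i
    simp only [hx, Finset.sum_apply, Pi.smul_apply, smul_eq_mul, equalSplit, mul_comm]
  rw [v_eq, x_eq]
  exact sum_mem_core fun k hk ↦ smul_mem_core (hr k hk) (equalSplit_mem_core (hS k hk))

end EqualSplit

/-- For the single-session game `ṽ` under Assumptions 1 and 3 with
nonnegative revenues, the allocation `x̃_i = Σ_{k=1}^{n} ([i ∈ {P(0),P(k)}] / 2) · r(k)`
lies in the core of `ṽ`. -/
theorem shapley_allocation_in_core_A13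
    {N : Type*} [Fintype N] [DecidableEq N]
    (wp : N) (n : ℕ) (hn : 1 ≤ n) (P : ℕ → N) (r : ℕ → ℝ)
    (hP0 : P 0 = wp)
    (hPk : ∀ k, 1 ≤ k → k ≤ n → P k ≠ wp)
    (hr : ∀ k, 1 ≤ k → k ≤ n → 0 ≤ r k)
    (vt : Finset N → ℝ)
    (hvt : ∀ F : Finset N, vt F = ∑ k ∈ Finset.Icc 1 n,
      if ({P 0, P k} : Finset N) ⊆ F then r k else 0)
    (xt : N → ℝ)
    (hxt : ∀ i : N, xt i = ∑ k ∈ Finset.Icc 1 n,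
      (if i ∈ ({P 0, P k} : Finset N) then (1 : ℝ) else 0) / 2 * r k) :
    (∑ i : N, xt i = vt Finset.univ) ∧ ∀ F : Finset N, vt F ≤ ∑ i ∈ F, xt i := by
  have card_eq_two : ∀ k ∈ Icc 1 n, #{P 0, P k} = 2 := fun k hk ↦
    card_pair (hP0.trans_ne (hPk k (mem_Icc.mp hk).1 (mem_Icc.mp hk).2).symm)
  refine shapley_allocation_in_core_A13_general (fun k _ ↦ insert_nonempty (P 0) {P k})
    (fun k hk ↦ hr k (mem_Icc.mp hk).1 (mem_Icc.mp hk).2) hvt fun i ↦ ?_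
  rw [hxt]
  exact sum_congr rfl fun k hk ↦ by rw [card_eq_two k hk, Nat.cast_ofNat]
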